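/- For all n ≥ 1, Hermite's constant satisfies γ_n ≥ (vol(Bⁿ)/2)^{-2/n}, where vol(Bⁿ) = π^{n/2}/Γ(n/2+1) is the volume of the n-dimensional Euclidean unit ball. Consequently γ_n ≥ n/(2πe) for all sufficiently large n. -/

import Mathlib

/-- The length of a shortest nonzero vector of a lattice `L` in Euclidean space. -/
noncomputable def shortestVector (n : ℕ) (L : Submodule ℤ (EuclideanSpace ℝ (Fin n))) : ℝ :=
  sInf {r : ℝ | ∃ v ∈ L, v ≠ 0 ∧ ‖v‖ = r}

/-- Hermite's constant `γ_n`: the supremum over all full-rank lattices `Λ ⊂ ℝⁿ` of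
`λ₁(Λ)² / det(Λ)^(2/n)`, where `λ₁` is the length of a shortest nonzero vector and
`det Λ` is the covolume of `Λ`. -/
noncomputable def hermiteConstant (n : ℕ) : ℝ :=
  sSup {r : ℝ | ∃ (L : Submodule ℤ (EuclideanSpace ℝ (Fin n)))
    (_ : DiscreteTopology L), IsZLattice ℝ L ∧
    r = (shortestVector n L) ^ 2 / (ZLattice.covolume L) ^ ((2 : ℝ) / n)}

/-- The volume of the `n`-dimensional Euclidean unit ball, `π^(n/2)/Γ(n/2+1)`. -/
noncomputable def unitBallVolume (n : ℕ) : ℝ :=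
  Real.pi ^ ((n : ℝ) / 2) / Real.Gamma ((n : ℝ) / 2 + 1)

lemma card_hyperplane (p n : ℕ) [Fact p.Prime] (z : Fin n → ZMod p) (hz : z ≠ 0) :
    (Finset.univ.filter (fun a : Fin n → ZMod p => ∑ i, a i * z i = 0)).card * p = p ^ n := by
  classical
  let f : (Fin n → ZMod p) →+ ZMod p :=
    { toFun := fun a => ∑ i, a i * z i
      map_zero' := by simp
      map_add' := by intro a b; simp [add_mul, Finset.sum_add_distrib] }
  have hsurj : Function.Surjective f := by
    obtain ⟨i, hi⟩ := Function.ne_iff.mp hz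
    intro y
    refine ⟨Pi.single i (y / z i), ?_⟩
    change ∑ j, (Pi.single i (y / z i) : Fin n → ZMod p) j * z j = y
    rw [Finset.sum_eq_single i]
    · simp only [Pi.single_eq_same]
      exact div_mul_cancel₀ _ hi
    · intro j _ hj
      simp [Pi.single_eq_of_ne hj]
    · simp
  have h1 := f.ker.card_mul_index
  rw [AddSubgroup.index_ker, AddMonoidHom.range_eq_top.mpr hsurj] at h1
  have h2 : Nat.card f.ker =
      (Finset.univ.filter (fun a : Fin n → ZMod p => ∑ i, a i * z i = 0)).card := by
    rw [← Fintype.card_subtype, ← Nat.card_eq_fintype_card]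
    exact Nat.card_congr (Equiv.subtypeEquivRight (fun a => by
      rw [AddMonoidHom.mem_ker]; rfl))
  rw [h2] at h1
  simpa using h1

lemma exists_functional (p n : ℕ) [Fact p.Prime] (hn : 1 ≤ n) (S : Finset (Fin n → ℤ))
    (hneg : ∀ z ∈ S, -z ∈ S) (h0 : ∀ z ∈ S, ∃ i, (z i : ZMod p) ≠ 0)
    (hcard : S.card < 2 * p) :
    ∃ a : Fin n → ZMod p, ∀ z ∈ S, ∑ i, a i * (z i : ZMod p) ≠ 0 := by
  classical
  by_contra! hcon
  have hp : 2 ≤ p := (Fact.out : p.Prime).two_le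
  let T : Finset (Fin n → ZMod p) := Finset.univ.erase 0
  have hT : T.card = p ^ n - 1 := by
    simp [T, Finset.card_erase_of_mem, ZMod.card]
  have hpn : p ≤ p ^ n := Nat.le_self_pow (by omega) p
  have key : ∀ a ∈ T, 2 ≤ (S.filter (fun z => ∑ i, a i * (z i : ZMod p) = 0)).card := by
    intro a _
    obtain ⟨z, hz, hza⟩ := hcon a
    refine Nat.succ_le_of_lt (Finset.one_lt_card.mpr ⟨z, by simp [hz, hza], -z, ?_, ?_⟩)
    · simp [hneg z hz, hza]
    · intro h
      obtain ⟨i, hi⟩ := h0 z hz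
      have := congrFun h i
      have h3 : z i = 0 := by simp only [Pi.neg_apply] at this; omega
      exact hi (by simp [h3])
  have hdc := Finset.sum_card_bipartiteAbove_eq_sum_card_bipartiteBelow (s := T) (t := S)
    (fun a z => ∑ i, a i * (z i : ZMod p) = 0)
  have hl : T.card * 2 ≤ ∑ a ∈ T, (S.filter (fun z => ∑ i, a i * (z i : ZMod p) = 0)).card := by
    simpa using Finset.card_nsmul_le_sum T _ 2 key
  have hr : ∀ z ∈ S, (T.filter (fun a => ∑ i, a i * (z i : ZMod p) = 0)).card * p + p = p ^ n := by
    intro z hz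
    have hz' : (fun i => (z i : ZMod p)) ≠ 0 := by
      obtain ⟨i, hi⟩ := h0 z hz
      exact Function.ne_iff.mpr ⟨i, hi⟩
    rw [← card_hyperplane p n _ hz', Finset.filter_erase,
      Finset.card_erase_of_mem (by simp)]
    have hpos : 0 < (Finset.univ.filter
      (fun a : Fin n → ZMod p => ∑ i, a i * (z i : ZMod p) = 0)).card :=
      Finset.card_pos.mpr ⟨0, by simp⟩
    obtain ⟨k, hk⟩ := Nat.exists_eq_add_of_lt hpos
    rw [hk]; simp; ring
  have hr' : (∑ z ∈ S, (T.filter (fun a => ∑ i, a i * (z i : ZMod p) = 0)).card) * p + S.card * p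
      = S.card * p ^ n := by
    rw [Finset.sum_mul, ← smul_eq_mul S.card p, ← Finset.sum_const, ← Finset.sum_add_distrib,
      Finset.sum_congr rfl hr, Finset.sum_const, smul_eq_mul]
  have hdc' : ∑ a ∈ T, (S.filter (fun z => ∑ i, a i * (z i : ZMod p) = 0)).card =
    ∑ z ∈ S, (T.filter (fun a => ∑ i, a i * (z i : ZMod p) = 0)).card := hdc
  rw [← hdc'] at hr'
  rw [hT] at hl
  obtain ⟨q, hq⟩ := Nat.exists_eq_add_of_le (show 1 ≤ p ^ n by omega)
  rw [hq] at hl hr'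
  simp only [Nat.add_sub_cancel_left] at hl
  have hqpos : 0 < q := by omega
  have h5 : q * 2 * p + S.card * p ≤ S.card * (1 + q) := by
    rw [← hr']; gcongr
  nlinarith [Nat.mul_le_mul_left S.card hp, Nat.zero_le S.card]

noncomputable def intEmb (n : ℕ) : (Fin n → ℤ) →ₗ[ℤ] EuclideanSpace ℝ (Fin n) where
  toFun z := WithLp.toLp 2 (fun i => (z i : ℝ))
  map_add' := by intro x y; ext i; simp
  map_smul' := by intro c x; ext i; simp

@[simp] lemma intEmb_apply (n : ℕ) (z : Fin n → ℤ) (i : Fin n) : intEmb n z i = (z i : ℝ) := rfl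

lemma intEmb_inj (n : ℕ) : Function.Injective (intEmb n) := by
  intro x y h
  ext i
  have := congrArg (fun v : EuclideanSpace ℝ (Fin n) => v i) h
  simpa using this

noncomputable def stdL (n : ℕ) : Submodule ℤ (EuclideanSpace ℝ (Fin n)) :=
  Submodule.span ℤ (Set.range (EuclideanSpace.basisFun (Fin n) ℝ).toBasis)

instance (n : ℕ) : DiscreteTopology (stdL n) := by unfold stdL; infer_instance
instance (n : ℕ) : IsZLattice ℝ (stdL n) := by unfold stdL; infer_instance

lemma stdL_eq (n : ℕ) : stdL n = (⊤ : Submodule ℤ (Fin n → ℤ)).map (intEmb n) := by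
  ext x
  rw [stdL, Module.Basis.mem_span_iff_repr_mem]
  simp only [Submodule.map_top, LinearMap.mem_range]
  constructor
  · intro h
    choose z hz using h
    refine ⟨z, ?_⟩
    ext i
    simpa using hz i
  · rintro ⟨z, rfl⟩ i
    exact ⟨z i, by simp⟩

lemma covol_stdL (n : ℕ) : ZLattice.covolume (stdL n) = 1 := by
  have h := ZSpan.isAddFundamentalDomain (EuclideanSpace.basisFun (Fin n) ℝ).toBasis
    (MeasureTheory.volume)
  rw [ZLattice.covolume_eq_measure_fundamentalDomain (stdL n) _ h]
  rw [MeasureTheory.measureReal_congr (ZSpan.fundamentalDomain_ae_parallelepiped _ _)]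
  simp [MeasureTheory.measureReal_def, OrthonormalBasis.volume_parallelepiped]

noncomputable def modL (n p : ℕ) (a : Fin n → ZMod p) : Submodule ℤ (EuclideanSpace ℝ (Fin n)) :=
  (LinearMap.ker (∑ i, (a i) • ((Int.castAddHom (ZMod p)).toIntLinearMap ∘ₗ
    (LinearMap.proj i : (Fin n → ℤ) →ₗ[ℤ] ℤ)))).map (intEmb n)

lemma mem_modL (n p : ℕ) (a : Fin n → ZMod p) (x) :
    x ∈ modL n p a ↔ ∃ z : Fin n → ℤ, ∑ i, a i * (z i : ZMod p) = 0 ∧ intEmb n z = x := by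
  simp [modL]

lemma modL_le (n p : ℕ) (a : Fin n → ZMod p) : modL n p a ≤ stdL n := by
  rw [stdL_eq]; exact Submodule.map_mono le_top

instance (n p : ℕ) (a : Fin n → ZMod p) : DiscreteTopology (modL n p a) :=
  DiscreteTopology.of_subset (X := EuclideanSpace ℝ (Fin n)) (t := modL n p a) (s := stdL n)
    (inferInstance : DiscreteTopology (stdL n)) (modL_le n p a)

lemma single_mem (n p : ℕ) (a : Fin n → ZMod p) (i : Fin n) :
    (EuclideanSpace.single i (p : ℝ)) ∈ modL n p a := by
  rw [mem_modL]
  refine ⟨Pi.single i (p : ℤ), ?_, ?_⟩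
  · refine Finset.sum_eq_zero fun j _ => ?_
    by_cases h : j = i
    · subst h; simp
    · simp [h]
  · ext j
    by_cases h : j = i
    · subst h; simp
    · simp [h]

instance (n p : ℕ) [Fact p.Prime] (a : Fin n → ZMod p) : IsZLattice ℝ (modL n p a) where
  span_top := by
    rw [eq_top_iff, ← (EuclideanSpace.basisFun (Fin n) ℝ).toBasis.span_eq, Submodule.span_le]
    rintro _ ⟨i, rfl⟩
    have hp : (p : ℝ) ≠ 0 := by exact_mod_cast (Fact.out : p.Prime).ne_zero
    have h := Submodule.smul_mem _ (p : ℝ)⁻¹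
      (Submodule.subset_span (R := ℝ) (single_mem n p a i))
    have he : (EuclideanSpace.basisFun (Fin n) ℝ).toBasis i =
        (p : ℝ)⁻¹ • EuclideanSpace.single i (p : ℝ) := by
      ext j
      by_cases hj : j = i
      · subst hj; simp [hp]
      · simp [hj]
    rw [he]
    exact h

lemma covol_modL (n p : ℕ) [Fact p.Prime] (a : Fin n → ZMod p) :
    ZLattice.covolume (modL n p a) ≤ p := by
  have h := ZLattice.covolume_div_covolume_eq_relIndex' _ _ (modL_le n p a)
  rw [covol_stdL, div_one] at h
  rw [h]
  norm_cast
  rw [stdL_eq, modL, Submodule.map_toAddSubgroup, Submodule.map_toAddSubgroup,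
    AddSubgroup.relIndex_map_map_of_injective _ _ (intEmb_inj n)]
  rw [Submodule.top_toAddSubgroup, AddSubgroup.relIndex_top_right, LinearMap.ker_toAddSubgroup,
    AddSubgroup.index_ker]
  calc _ ≤ Nat.card (ZMod p) := Nat.card_le_card_of_injective _ Subtype.val_injective
    _ = p := by simp

lemma unitBallVolume_pos (n : ℕ) : 0 < unitBallVolume n := by
  unfold unitBallVolume
  have := Real.Gamma_pos_of_pos (show (0 : ℝ) < n / 2 + 1 by positivity)
  positivity

lemma volume_ball_eq (n : ℕ) (hn : 1 ≤ n) (r : ℝ) (hr : 0 ≤ r) :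
    MeasureTheory.volume (Metric.ball (0 : EuclideanSpace ℝ (Fin n)) r) =
      ENNReal.ofReal (r ^ n * unitBallVolume n) := by
  have : Nonempty (Fin n) := ⟨⟨0, hn⟩⟩
  rw [EuclideanSpace.volume_ball, Fintype.card_fin, ENNReal.ofReal_mul (by positivity),
    ENNReal.ofReal_pow hr, unitBallVolume, Real.sqrt_eq_rpow, ← Real.rpow_natCast,
    ← Real.rpow_mul Real.pi_pos.le]
  congr 4
  ring

lemma count_tendsto (n : ℕ) (hn : 1 ≤ n) :
    Filter.Tendsto (fun c : ℝ => (Nat.card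
      ({x ∈ (Set.univ : Set (EuclideanSpace ℝ (Fin n))) | ‖x‖ ^ n ≤ c} ∩ stdL n :
        Set (EuclideanSpace ℝ (Fin n))) : ℝ) / c)
      Filter.atTop (nhds (unitBallVolume n)) := by
  have : Nonempty (Fin n) := ⟨⟨0, hn⟩⟩
  have hset : {x ∈ (Set.univ : Set (EuclideanSpace ℝ (Fin n))) | ‖x‖ ^ n ≤ 1} =
      Metric.closedBall 0 1 := by
    ext x
    simp [pow_le_one_iff_of_nonneg (norm_nonneg x) (show n ≠ 0 by omega)]
  have h := ZLattice.covolume.tendsto_card_le_div' (stdL n) (X := Set.univ)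
    (F := fun x => ‖x‖ ^ n) (by simp)
    (by intro x r hr; simp [norm_smul, mul_pow, abs_of_nonneg hr])
    (by rw [hset]; exact Metric.isBounded_closedBall)
    (by rw [hset]; exact Metric.isClosed_closedBall.measurableSet)
    (by rw [hset, frontier_closedBall _ one_ne_zero]
        exact MeasureTheory.Measure.addHaar_sphere _ _ _)
  rw [hset, covol_stdL, div_one, MeasureTheory.measureReal_def,
    MeasureTheory.Measure.addHaar_closedBall_eq_addHaar_ball, volume_ball_eq n hn 1 zero_le_one,
    ENNReal.toReal_ofReal (by have := unitBallVolume_pos n; positivity), one_pow, one_mul] at h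
  exact h

lemma shortest_nonneg (n : ℕ) (L) : 0 ≤ shortestVector n L :=
  Real.sInf_nonneg (by rintro _ ⟨v, _, _, rfl⟩; exact norm_nonneg v)

lemma hermite_bdd (n : ℕ) (hn : 1 ≤ n) : BddAbove {r : ℝ | ∃ (L : Submodule ℤ (EuclideanSpace ℝ (Fin n)))
    (_ : DiscreteTopology L), IsZLattice ℝ L ∧
    r = (shortestVector n L) ^ 2 / (ZLattice.covolume L) ^ ((2 : ℝ) / n)} := by
  refine ⟨(2 ^ n / unitBallVolume n) ^ ((2 : ℝ) / n), ?_⟩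
  rintro _ ⟨L, hd, hL, rfl⟩
  have hv := unitBallVolume_pos n
  have hc := ZLattice.covolume_pos L
  have hs := shortest_nonneg n L
  have hn0 : (n : ℝ) ≠ 0 := by positivity
  rw [div_le_iff₀ (by positivity), ← Real.mul_rpow (by positivity) hc.le]
  have hmain : shortestVector n L ^ n ≤ 2 ^ n / unitBallVolume n * ZLattice.covolume L := by
    by_contra! hlt
    let b := Module.Free.chooseBasis ℤ L
    have hfund := ZLattice.isAddFundamentalDomain b MeasureTheory.volume
    have hcov := ZLattice.covolume_eq_measure_fundamentalDomain L MeasureTheory.volume hfund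
    have : Countable L.toAddSubgroup := inferInstanceAs (Countable L)
    obtain ⟨x, hx0, hx⟩ := MeasureTheory.exists_ne_zero_mem_lattice_of_measure_mul_two_pow_lt_measure
      (L := L.toAddSubgroup) (s := Metric.ball 0 (shortestVector n L)) hfund
      (by intro x hx; simpa using hx) (convex_ball _ _) (by
        rw [volume_ball_eq n hn _ hs, ← ENNReal.ofReal_toReal
          (Bornology.IsBounded.measure_lt_top (ZSpan.fundamentalDomain_isBounded _)).ne]
        rw [← MeasureTheory.measureReal_def, ← hcov, finrank_euclideanSpace_fin]
        rw [show (2 : ENNReal) ^ n = ENNReal.ofReal (2 ^ n) by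
          rw [ENNReal.ofReal_pow (by norm_num)]; simp]
        rw [← ENNReal.ofReal_mul hc.le, ENNReal.ofReal_lt_ofReal_iff']
        rw [div_mul_eq_mul_div, div_lt_iff₀ hv] at hlt
        constructor
        · linarith
        · refine lt_of_le_of_lt ?_ hlt
          positivity)
    have hle : shortestVector n L ≤ ‖(x : EuclideanSpace ℝ (Fin n))‖ := by
      refine csInf_le ⟨0, ?_⟩ ⟨x, x.2, by simpa using hx0, rfl⟩
      rintro _ ⟨v, _, _, rfl⟩
      exact norm_nonneg v
    rw [mem_ball_zero_iff] at hx
    linarith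
  calc shortestVector n L ^ 2 = (shortestVector n L ^ n) ^ ((2 : ℝ) / n) := by
        rw [← Real.rpow_natCast _ n, ← Real.rpow_mul hs, mul_div_cancel₀ _ hn0]
        norm_num
    _ ≤ _ := Real.rpow_le_rpow (by positivity) hmain (by positivity)

lemma c_lt (n : ℕ) (hn : 1 ≤ n) (c : ℝ) (hc2 : c < 2 / unitBallVolume n) :
    ∀ᶠ x : ℝ in Filter.atTop, c * x < x ^ n := by
  rcases hn.eq_or_lt with rfl | hn
  · have h1 : unitBallVolume 1 = 2 := by
      unfold unitBallVolume
      rw [Real.Gamma_add_one (by norm_num)]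
      simp only [Nat.cast_one, Real.Gamma_one_half_eq]
      rw [← Real.sqrt_eq_rpow]
      have : √Real.pi ≠ 0 := by positivity
      field_simp
    rw [h1] at hc2
    filter_upwards [Filter.eventually_gt_atTop 0] with x hx
    nlinarith
  · filter_upwards [Filter.eventually_gt_atTop c, Filter.eventually_ge_atTop 1] with x hx hx1
    calc c * x < x * x := by nlinarith
      _ = x ^ 2 := by ring
      _ ≤ x ^ n := pow_le_pow_right₀ hx1 hn

lemma hermite_ge (n : ℕ) (hn : 1 ≤ n) (c : ℝ) (hc : 0 < c) (hc2 : c < 2 / unitBallVolume n) :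
    c ^ ((2 : ℝ) / n) ≤ hermiteConstant n := by
  classical
  have hv := unitBallVolume_pos n
  have hn0 : (n : ℝ) ≠ 0 := by positivity
  have hlt : unitBallVolume n < 2 / c := by
    rw [lt_div_iff₀ hc]; rw [lt_div_iff₀ hv] at hc2; linarith
  have ht : Filter.Tendsto (fun x : ℝ => c * x) Filter.atTop Filter.atTop :=
    Filter.tendsto_id.const_mul_atTop hc
  have hev := (ht.eventually ((count_tendsto n hn).eventually (gt_mem_nhds hlt))).and
    (c_lt n hn c hc2)
  obtain ⟨N, hN⟩ := Filter.eventually_atTop.mp (tendsto_natCast_atTop_atTop.eventually hev)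
  obtain ⟨p, hpN, hp⟩ := Nat.exists_infinite_primes N
  have : Fact p.Prime := ⟨hp⟩
  obtain ⟨hcount, hsmall⟩ := hN p hpN
  have hp0 : (0 : ℝ) < p := by exact_mod_cast hp.pos
  rw [div_lt_iff₀ (by positivity), show 2 / c * (c * p) = 2 * (p : ℝ) by field_simp] at hcount
  set A : Set (EuclideanSpace ℝ (Fin n)) :=
    ({x ∈ (Set.univ : Set (EuclideanSpace ℝ (Fin n))) | ‖x‖ ^ n ≤ c * p} ∩ stdL n) with hA
  have hfin : A.Finite := by
    refine ZSpan.setFinite_inter _ ?_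
    refine (Metric.isBounded_closedBall (x := 0) (r := (p : ℝ))).subset ?_
    rintro x ⟨_, hx⟩
    rw [mem_closedBall_zero_iff]
    exact (lt_of_pow_lt_pow_left₀ n hp0.le (hx.trans_lt hsmall)).le
  have hfinB : (intEmb n ⁻¹' A).Finite := hfin.preimage (intEmb_inj n).injOn
  let S : Finset (Fin n → ℤ) := hfinB.toFinset.erase 0
  have hmemS : ∀ z, z ∈ S ↔ z ≠ 0 ∧ ‖intEmb n z‖ ^ n ≤ c * p := by
    intro z
    have : intEmb n z ∈ stdL n := by rw [stdL_eq]; exact ⟨z, trivial, rfl⟩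
    simp [S, hA, this]
  have hScard : S.card < 2 * p := by
    have h1 : S.card ≤ Nat.card A := by
      calc S.card ≤ hfinB.toFinset.card := Finset.card_erase_le
        _ = (hfinB.toFinset.image (intEmb n)).card :=
          (Finset.card_image_of_injective _ (intEmb_inj n)).symm
        _ ≤ hfin.toFinset.card := by
          refine Finset.card_le_card ?_
          intro x hx
          simp only [Finset.mem_image, Set.Finite.mem_toFinset, Set.mem_preimage] at hx ⊢
          obtain ⟨z, hz, rfl⟩ := hx
          exact hz
        _ = Nat.card A := (Nat.card_eq_card_finite_toFinset hfin).symm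
    have h2 : (Nat.card A : ℝ) < ((2 * p : ℕ) : ℝ) := by push_cast; exact hcount
    exact lt_of_le_of_lt h1 (by exact_mod_cast h2)
  obtain ⟨a, ha⟩ := exists_functional p n hn S
    (by
      intro z hz
      rw [hmemS] at hz ⊢
      exact ⟨neg_ne_zero.mpr hz.1, by rw [map_neg, norm_neg]; exact hz.2⟩)
    (by
      intro z hz
      rw [hmemS] at hz
      obtain ⟨i, hi⟩ := Function.ne_iff.mp hz.1
      refine ⟨i, fun h => hi ?_⟩
      rw [ZMod.intCast_zmod_eq_zero_iff_dvd] at h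
      refine Int.eq_zero_of_abs_lt_dvd h ?_
      have h1 : ‖intEmb n z‖ < p := lt_of_pow_lt_pow_left₀ n hp0.le (hz.2.trans_lt hsmall)
      have h2 := (PiLp.norm_apply_le (intEmb n z) i).trans_lt h1
      rw [intEmb_apply, Real.norm_eq_abs] at h2
      exact_mod_cast h2)
    hScard
  have hmin : (c * p) ^ ((1 : ℝ) / n) ≤ shortestVector n (modL n p a) := by
    refine le_csInf ⟨_, EuclideanSpace.single ⟨0, hn⟩ (p : ℝ), single_mem n p a _, ?_, rfl⟩ ?_
    · simp [hp.ne_zero]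
    · rintro _ ⟨v, hv, hv0, rfl⟩
      obtain ⟨z, hz, rfl⟩ := (mem_modL n p a v).mp hv
      have hzS : z ∉ S := fun h => ha z h hz
      rw [hmemS] at hzS
      push Not at hzS
      have h3 := hzS (by rintro rfl; simp at hv0)
      calc (c * p) ^ ((1 : ℝ) / n) ≤ (‖intEmb n z‖ ^ n) ^ ((1 : ℝ) / n) :=
            Real.rpow_le_rpow (by positivity) h3.le (by positivity)
        _ = ‖intEmb n z‖ := by
          rw [one_div, Real.pow_rpow_inv_natCast (norm_nonneg _) (by omega)]
  have hcov := covol_modL n p a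
  have hcovpos := ZLattice.covolume_pos (modL n p a)
  refine le_trans ?_ (le_csSup (hermite_bdd n hn)
    ⟨modL n p a, inferInstance, inferInstance, rfl⟩)
  rw [le_div_iff₀ (by positivity), ← Real.mul_rpow hc.le hcovpos.le]
  calc (c * ZLattice.covolume (modL n p a)) ^ ((2 : ℝ) / n) ≤ (c * p) ^ ((2 : ℝ) / n) := by
        gcongr
    _ = ((c * p) ^ ((1 : ℝ) / n)) ^ 2 := by
        rw [← Real.rpow_natCast, ← Real.rpow_mul (by positivity)]
        congr 1
        push_cast
        ring
    _ ≤ (shortestVector n (modL n p a)) ^ 2 := pow_le_pow_left₀ (by positivity) hmin 2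

lemma hermite_part1 (n : ℕ) (hn : 1 ≤ n) :
    (unitBallVolume n / 2) ^ (-(2 : ℝ) / n) ≤ hermiteConstant n := by
  have hv := unitBallVolume_pos n
  have hw : 0 < 2 / unitBallVolume n := by positivity
  have h1 : (unitBallVolume n / 2) ^ (-(2 : ℝ) / n) = (2 / unitBallVolume n) ^ ((2 : ℝ) / n) := by
    rw [neg_div, Real.rpow_neg (by positivity), ← Real.inv_rpow (by positivity), inv_div]
  rw [h1]
  have hcont : Filter.Tendsto (fun c : ℝ => c ^ ((2 : ℝ) / n))
      (nhdsWithin (2 / unitBallVolume n) (Set.Iio (2 / unitBallVolume n)))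
      (nhds ((2 / unitBallVolume n) ^ ((2 : ℝ) / n))) :=
    ((Real.continuousAt_rpow_const _ _ (Or.inl hw.ne')).tendsto).mono_left nhdsWithin_le_nhds
  refine le_of_tendsto hcont ?_
  filter_upwards [Ioo_mem_nhdsLT hw] with c hc
  exact hermite_ge n hn c hc.1 hc.2

lemma gamma_ge (x : ℝ) (hx : 0 < x) : x ^ x * Real.exp (-x) ≤ Real.Gamma (x + 1) := by
  rw [Real.Gamma_eq_integral (by positivity), ← integral_exp_neg_Ioi x,
    ← MeasureTheory.integral_const_mul]
  have hint := Real.GammaIntegral_convergent (show 0 < x + 1 by positivity)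
  have hsub : Set.Ioi x ⊆ Set.Ioi 0 := Set.Ioi_subset_Ioi hx.le
  refine le_trans (MeasureTheory.setIntegral_mono_on
    ((integrableOn_exp_neg_Ioi x).const_mul _) (hint.mono_set hsub) measurableSet_Ioi ?_)
    (MeasureTheory.setIntegral_mono_set hint ?_ (Filter.Eventually.of_forall hsub))
  · intro t ht
    have ht' : x < t := ht
    rw [mul_comm, add_sub_cancel_right]
    gcongr
  · filter_upwards [MeasureTheory.ae_restrict_mem measurableSet_Ioi] with t ht
    have ht' : (0 : ℝ) < t := ht
    simp only [Pi.zero_apply]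
    positivity

lemma asym (n : ℕ) (hn : 1 ≤ n) :
    n / (2 * Real.pi * Real.exp 1) ≤ (unitBallVolume n / 2) ^ (-(2 : ℝ) / n) := by
  have hv := unitBallVolume_pos n
  have hn1 : (0 : ℝ) < n := by exact_mod_cast hn
  have hg := gamma_ge ((n : ℝ) / 2) (by positivity)
  have hb : unitBallVolume n / 2 ≤ ((2 * Real.pi * Real.exp 1) / n) ^ ((n : ℝ) / 2) := by
    calc unitBallVolume n / 2 ≤ unitBallVolume n := by linarith
      _ ≤ Real.pi ^ ((n : ℝ) / 2) / (((n : ℝ) / 2) ^ ((n : ℝ) / 2) * Real.exp (-((n : ℝ) / 2))) := by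
        unfold unitBallVolume
        gcongr
      _ = _ := by
        rw [show (2 * Real.pi * Real.exp 1) / (n : ℝ) = Real.pi / ((n : ℝ) / 2) * Real.exp 1 by
          field_simp]
        rw [Real.mul_rpow (by positivity) (by positivity), Real.div_rpow Real.pi_pos.le
          (show (0 : ℝ) ≤ (n : ℝ) / 2 by positivity), ← Real.exp_mul, one_mul, Real.exp_neg]
        field_simp
  calc n / (2 * Real.pi * Real.exp 1)
      = (((2 * Real.pi * Real.exp 1) / n) ^ ((n : ℝ) / 2)) ^ (-(2 : ℝ) / n) := by
        rw [← Real.rpow_mul (by positivity),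
          show (n : ℝ) / 2 * (-2 / n) = -1 by field_simp, Real.rpow_neg_one, inv_div]
    _ ≤ _ := Real.rpow_le_rpow_of_nonpos (by positivity) hb
        (div_nonpos_of_nonpos_of_nonneg (by norm_num) hn1.le)

/-- Minkowski–Hlawka lower bound for Hermite's constant: `γ_n ≥ (vol(Bⁿ)/2)^(-2/n)`;
consequently `γ_n ≥ n/(2πe)` for all sufficiently large `n`. -/
theorem hermite_lower_bound :
    (∀ n : ℕ, 1 ≤ n → hermiteConstant n ≥ (unitBallVolume n / 2) ^ (-(2 : ℝ) / n)) ∧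
    ∀ᶠ n : ℕ in Filter.atTop, hermiteConstant n ≥ n / (2 * Real.pi * Real.exp 1) := by
  refine ⟨fun n hn => hermite_part1 n hn, ?_⟩
  filter_upwards [Filter.eventually_ge_atTop 1] with n hn
  exact (asym n hn).trans (hermite_part1 n hn)
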